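/- Let d ≥ 4, let k be an integer with 0 ≤ k ≤ d/3 − 1, let x_1, …, x_k be orthonormal vectors in ℝ^d, and let x ∈ B_d(0,1). Let S = S^{d−1} ∩ {w ∈ ℝ^d : |⟨x_i, w⟩| ≤ d^{−3} for all i ≤ k} (a set of positive σ_{d−1}-measure), and let μ be the probability measure obtained by conditioning σ_{d−1} on S. Let 0 < δ ≤ 1 and let φ : S^{d−1} → ℝ^d be any map satisfying ‖φ(w) − w‖ ≤ δ for all w ∈ S^{d−1}. If y is distributed according to μ and z = φ(y), then for every t ≥ 4, ℙ(|⟨x, z⟩| ≥ √(t/d) + 1/d² + δ) ≤ 2 √t · e^{−t/3}. -/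

import Mathlib

open MeasureTheory
open scoped RealInnerProductSpace

/-- The uniform probability measure on the unit sphere of `ℝ^d`, viewed as a measure on
`EuclideanSpace ℝ (Fin d)`: the normalized rotation-invariant surface measure. -/
noncomputable def sphereUniform (d : ℕ) : Measure (EuclideanSpace ℝ (Fin d)) :=
  (((volume : Measure (EuclideanSpace ℝ (Fin d))).toSphere Set.univ)⁻¹ •
    (volume : Measure (EuclideanSpace ℝ (Fin d))).toSphere).map Subtype.val

/-! Conditioning on an event that only depends on the projection of `y` to a subspace `K` does not
affect the direction of the component of `y` in `Kᗮ`. Passing from the sphere to the solid cone it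
spans in the unit ball, one slices along `Kᗮ`: for such an event every slice is a union of spheres
centred at `0`, so by polar coordinates the conditional tail of `⟪v, y⟫`, `v ∈ Kᗮ`, is at most that
of a spherical cap in `Kᗮ`. A solid cap of height `s` lies in a ball of radius `exp (-s² / 2)`,
whose volume gives the tail `2 exp (-(dim Kᗮ) s² / 2)`. On the slab, the component of `x₀` in `K`
and the perturbation `φ y - y` only shift the threshold. -/

open Metric Set

section Cones

variable {F : Type*} [NormedAddCommGroup F] [InnerProductSpace ℝ F]

/-- The cone spanned by the part of `B` on the unit sphere. Since `‖0‖⁻¹ = 0`, the apex belongs to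
it exactly when `0 ∈ B`. -/
def coneOver (B : Set F) : Set F := {w | ‖w‖⁻¹ • w ∈ B}

/-- The solid circular cone around `e` spanned by the spherical cap of height `s`. The height is
measured against `⟪e, ·⟫`, and `e` is not required to be a unit vector. -/
def solidCone (e : F) (s : ℝ) : Set F := {w | s * ‖w‖ ≤ ⟪e, w⟫}

/-- The union of the opposite solid cones around `e` and `-e`, as a single inequality. -/
def doubleCone (e : F) (s : ℝ) : Set F := {w | s * ‖w‖ ≤ |⟪e, w⟫|}

lemma doubleCone_eq_union (e : F) (s : ℝ) :
    doubleCone e s = solidCone e s ∪ solidCone (-e) s := by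
  ext w
  simp only [doubleCone, solidCone, mem_union, mem_ofPred_eq, inner_neg_left, le_abs]

lemma coneOver_doubleCone (e : F) (s : ℝ) : coneOver (doubleCone e s) = doubleCone e s := by
  ext w
  rcases eq_or_ne w 0 with rfl | hw
  · simp [coneOver]
  · have hw' : 0 < ‖w‖⁻¹ := inv_pos.2 (norm_pos_iff.2 hw)
    simp only [coneOver, doubleCone, mem_ofPred_eq, norm_smul, inner_smul_right, abs_mul,
      Real.norm_eq_abs, abs_of_pos hw', mul_left_comm s, mul_le_mul_iff_right₀ hw']

lemma isClosed_doubleCone (e : F) (s : ℝ) : IsClosed (doubleCone e s) :=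
  isClosed_le (by fun_prop) (by fun_prop)

lemma exp_le_four_mul {x : ℝ} (hx : 1 / 2 ≤ x) (hx1 : x ≤ 1) : Real.exp x ≤ 4 * x := by
  have hquad := (abs_le.1 (Real.abs_exp_sub_one_sub_id_le (abs_le.2 ⟨by linarith, hx1⟩))).2
  nlinarith

lemma exists_quadratic_le_exp_neg_sq {s : ℝ} (hs0 : 0 ≤ s) (hs1 : s ≤ 1) :
    ∃ c ≥ 0, ∀ r, 0 ≤ r → r ≤ 1 → r ^ 2 - 2 * c * (s * r) + c ^ 2 ≤ Real.exp (-s ^ 2) := by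
  rcases le_total (s ^ 2) (1 / 2) with hs | hs
  · -- The quadratic is convex in `r`; for `c = s` its larger end value is `1 - s ^ 2`, at `r = 1`.
    refine ⟨s, hs0, fun r hr0 hr1 ↦ ?_⟩
    have hend : r ^ 2 - 2 * s * (s * r) + s ^ 2 ≤ 1 - s ^ 2 := by
      nlinarith [mul_nonneg (sub_nonneg.2 hr1) (by linarith : 0 ≤ 1 - 2 * s ^ 2),
        mul_nonneg (sub_nonneg.2 hr1) hr0]
    linarith [Real.add_one_le_exp (-s ^ 2)]
  · -- For `c = 1 / (2 * s)` the end values are both `c ^ 2`.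
    have hs' : 0 < s := by nlinarith
    refine ⟨1 / (2 * s), by positivity, fun r hr0 hr1 ↦ ?_⟩
    calc r ^ 2 - 2 * (1 / (2 * s)) * (s * r) + (1 / (2 * s)) ^ 2
        = (4 * s ^ 2)⁻¹ - r * (1 - r) := by field_simp; ring
      _ ≤ (4 * s ^ 2)⁻¹ := sub_le_self _ (mul_nonneg hr0 (sub_nonneg.2 hr1))
      _ ≤ (Real.exp (s ^ 2))⁻¹ :=
        inv_anti₀ (Real.exp_pos _) (exp_le_four_mul hs (by nlinarith))
      _ = Real.exp (-s ^ 2) := (Real.exp_neg _).symm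

lemma norm_sub_smul_sq_le_of_mem_solidCone {e b : F} (he : ‖e‖ ≤ 1) {s c : ℝ} (hc : 0 ≤ c)
    (hb : b ∈ solidCone e s) : ‖b - c • e‖ ^ 2 ≤ ‖b‖ ^ 2 - 2 * c * (s * ‖b‖) + c ^ 2 := by
  have hce : (c * ‖e‖) ^ 2 ≤ c ^ 2 :=
    pow_le_pow_left₀ (by positivity) (mul_le_of_le_one_right hc he) 2
  have hcb : 2 * c * (s * ‖b‖) ≤ 2 * c * ⟪e, b⟫ := mul_le_mul_of_nonneg_left hb (by positivity)
  rw [norm_sub_sq_real, inner_smul_right, real_inner_comm, norm_smul, Real.norm_of_nonneg hc]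
  linarith

lemma exists_ball_inter_solidCone_subset_closedBall {e : F} (he : ‖e‖ ≤ 1) {s : ℝ} (hs : 0 ≤ s) :
    ∃ p, ball 0 1 ∩ solidCone e s ⊆ closedBall p (Real.exp (-s ^ 2 / 2)) := by
  rcases le_or_gt s 1 with hs1 | hs1
  · obtain ⟨c, hc, hquad⟩ := exists_quadratic_le_exp_neg_sq hs hs1
    refine ⟨c • e, fun b ⟨hb1, hb⟩ ↦ ?_⟩
    rw [mem_closedBall, dist_eq_norm, ← pow_le_pow_iff_left₀ (norm_nonneg _) (Real.exp_pos _).le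
      two_ne_zero, ← Real.exp_nat_mul, Nat.cast_ofNat, mul_div_cancel₀ _ two_ne_zero]
    exact (norm_sub_smul_sq_le_of_mem_solidCone he hc hb).trans
      (hquad _ (norm_nonneg b) (mem_ball_zero_iff.1 hb1).le)
  · refine ⟨0, fun b ⟨_, hb⟩ ↦ ?_⟩
    have hle : s * ‖b‖ ≤ 1 * ‖b‖ := hb.trans <| (real_inner_le_norm e b).trans (by gcongr)
    have hb0 : b = 0 := by
      by_contra hne
      exact hs1.not_ge (le_of_mul_le_mul_right hle (norm_pos_iff.2 hne))
    simpa [hb0] using (Real.exp_pos _).le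

end Cones

section Polar

variable {F : Type*} [NormedAddCommGroup F] [InnerProductSpace ℝ F] [FiniteDimensional ℝ F]
  [MeasurableSpace F] [BorelSpace F]

lemma measure_norm_preimage_inter_coneOver [Nontrivial F] (μ : Measure F) [μ.IsAddHaarMeasure]
    (I : Set ℝ) (B : Set F) :
    μ (norm ⁻¹' I ∩ coneOver B) = μ.toSphere (Subtype.val ⁻¹' B) *
      Measure.volumeIoiPow (Module.finrank ℝ F - 1) (Subtype.val ⁻¹' I) := by
  rw [← Measure.prod_prod, ← μ.measurePreserving_homeomorphUnitSphereProd.measure_preimage_emb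
    (Homeomorph.measurableEmbedding _),
    comap_subtype_coe_apply (measurableSet_singleton _).compl,
    ← measure_sdiff_null (t := {0}) (measure_singleton _)]
  congr 1
  ext w
  simp [coneOver, and_comm, and_assoc]

lemma toSphere_preimage_val (μ : Measure F) [μ.IsAddHaarMeasure] (B : Set F) :
    μ.toSphere (Subtype.val ⁻¹' B) = Module.finrank ℝ F * μ (ball 0 1 ∩ coneOver B) := by
  rcases subsingleton_or_nontrivial F with hF | hF
  · simp [μ.toSphere_eq_zero_iff.2 hF, Module.finrank_zero_of_subsingleton]
  have hn : 0 < Module.finrank ℝ F := Module.finrank_pos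
  have hball : ball (0 : F) 1 = norm ⁻¹' Iio 1 := by ext; simp
  have hIio : (Subtype.val ⁻¹' Iio 1 : Set (Ioi (0 : ℝ))) = Iio ⟨1, mem_Ioi.2 one_pos⟩ := rfl
  rw [hball, measure_norm_preimage_inter_coneOver, hIio, Measure.volumeIoiPow_apply_Iio,
    one_pow, Nat.cast_pred hn, sub_add_cancel, one_div,
    ENNReal.ofReal_inv_of_pos (Nat.cast_pos.2 hn), ENNReal.ofReal_natCast, mul_left_comm,
    ENNReal.mul_inv_cancel (Nat.cast_ne_zero.2 hn.ne') (ENNReal.natCast_ne_top _), mul_one]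

lemma measure_ball_inter_solidCone_le (μ : Measure F) [μ.IsAddHaarMeasure] {e : F} (he : ‖e‖ ≤ 1)
    {s : ℝ} (hs : 0 ≤ s) :
    μ (ball 0 1 ∩ solidCone e s) ≤
      ENNReal.ofReal (Real.exp (-(Module.finrank ℝ F) * s ^ 2 / 2)) * μ (ball 0 1) := by
  obtain ⟨p, hp⟩ := exists_ball_inter_solidCone_subset_closedBall he hs
  calc μ (ball 0 1 ∩ solidCone e s) ≤ μ (closedBall p (Real.exp (-s ^ 2 / 2))) := measure_mono hp
    _ = ENNReal.ofReal (Real.exp (-s ^ 2 / 2) ^ Module.finrank ℝ F) * μ (ball 0 1) :=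
      μ.addHaar_closedBall p (Real.exp_pos _).le
    _ = _ := by rw [← Real.exp_nat_mul]; congr 3; ring

lemma measure_ball_inter_doubleCone_le (μ : Measure F) [μ.IsAddHaarMeasure] {e : F}
    (he : ‖e‖ ≤ 1) {s : ℝ} (hs : 0 ≤ s) :
    μ (ball 0 1 ∩ doubleCone e s) ≤
      ENNReal.ofReal (2 * Real.exp (-(Module.finrank ℝ F) * s ^ 2 / 2)) * μ (ball 0 1) := by
  rw [doubleCone_eq_union, inter_union_distrib_left, two_mul,
    ENNReal.ofReal_add (Real.exp_pos _).le (Real.exp_pos _).le, add_mul]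
  exact (measure_union_le _ _).trans (add_le_add (measure_ball_inter_solidCone_le μ he hs)
    (measure_ball_inter_solidCone_le μ ((norm_neg e).trans_le he) hs))

lemma measure_norm_preimage_inter_doubleCone_le (μ : Measure F) [μ.IsAddHaarMeasure] {e : F}
    (he : ‖e‖ ≤ 1) {s : ℝ} (hs : 0 ≤ s) (I : Set ℝ) :
    μ (norm ⁻¹' I ∩ doubleCone e s) ≤
      ENNReal.ofReal (2 * Real.exp (-(Module.finrank ℝ F) * s ^ 2 / 2)) * μ (norm ⁻¹' I) := by
  rcases subsingleton_or_nontrivial F with hF | hF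
  · refine (measure_mono inter_subset_left).trans (le_mul_of_one_le_left' ?_)
    simp [Module.finrank_zero_of_subsingleton]
  have hcap : μ.toSphere (Subtype.val ⁻¹' doubleCone e s) ≤
      ENNReal.ofReal (2 * Real.exp (-(Module.finrank ℝ F) * s ^ 2 / 2)) * μ.toSphere univ := by
    rw [toSphere_preimage_val, coneOver_doubleCone, μ.toSphere_apply_univ, mul_left_comm]
    gcongr
    exact measure_ball_inter_doubleCone_le μ he hs
  have hI : μ (norm ⁻¹' I) = μ.toSphere univ *
      Measure.volumeIoiPow (Module.finrank ℝ F - 1) (Subtype.val ⁻¹' I) := by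
    simpa [coneOver] using measure_norm_preimage_inter_coneOver μ I univ
  calc μ (norm ⁻¹' I ∩ doubleCone e s)
      = μ.toSphere (Subtype.val ⁻¹' doubleCone e s) *
          Measure.volumeIoiPow (Module.finrank ℝ F - 1) (Subtype.val ⁻¹' I) := by
        rw [← measure_norm_preimage_inter_coneOver, coneOver_doubleCone]
    _ ≤ _ := by rw [hI, ← mul_assoc]; gcongr

end Polar

section AxialSymmetry

variable {F : Type*} [NormedAddCommGroup F] [InnerProductSpace ℝ F]

lemma norm_add_coe_orthogonal_sq {K : Submodule ℝ F} (a : K) (b : Kᗮ) :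
    ‖(a : F) + b‖ ^ 2 = ‖a‖ ^ 2 + ‖b‖ ^ 2 := by
  simpa only [← sq, Submodule.norm_coe] using
    norm_add_sq_eq_norm_sq_add_norm_sq_real (K.inner_right_of_mem_orthogonal a.2 b.2)

/-- Membership in `A` depends only on the projection to `K` and on the norm; equivalently, `A` is
invariant under the isometries fixing `K` pointwise. -/
def AxiallySymmetric (K : Submodule ℝ F) [K.HasOrthogonalProjection] (A : Set F) : Prop :=
  ∀ ⦃w w' : F⦄, K.starProjection w = K.starProjection w' → ‖w‖ = ‖w'‖ → w ∈ A → w' ∈ A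

namespace AxiallySymmetric

variable {K : Submodule ℝ F} [K.HasOrthogonalProjection] {A B : Set F}

lemma inter (hA : AxiallySymmetric K A) (hB : AxiallySymmetric K B) :
    AxiallySymmetric K (A ∩ B) :=
  fun _ _ hP hn hw ↦ ⟨hA hP hn hw.1, hB hP hn hw.2⟩

lemma norm_preimage (I : Set ℝ) : AxiallySymmetric K (norm ⁻¹' I) :=
  fun _ _ _ hn hw ↦ by rwa [mem_preimage, ← hn]

lemma coneOver (hB : AxiallySymmetric K B) : AxiallySymmetric K (coneOver B) :=
  fun w w' hP hn hw ↦ hB (by rw [map_smul, map_smul, hP, hn]) (by rw [norm_smul, norm_smul, hn]) hw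

lemma slice_eq_norm_preimage (hA : AxiallySymmetric K A) (a : K) :
    {b : Kᗮ | (a : F) + b ∈ A} = norm ⁻¹' (norm '' {b : Kᗮ | (a : F) + b ∈ A}) := by
  refine (subset_preimage_image _ _).antisymm ?_
  rintro b ⟨b', hb', hbb'⟩
  have hproj (b : Kᗮ) : K.starProjection ((a : F) + b) = a := by
    simp [(K.starProjection_apply_eq_zero_iff).2 b.2]
  refine hA ((hproj b').trans (hproj b).symm) ?_ hb'
  rw [← pow_left_inj₀ (norm_nonneg _) (norm_nonneg _) two_ne_zero, norm_add_coe_orthogonal_sq,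
    norm_add_coe_orthogonal_sq, hbb']

end AxiallySymmetric

variable {K : Submodule ℝ F} {v : F} {s : ℝ}

lemma mem_doubleCone_of_add_mem (hv : v ∈ Kᗮ) (hs : 0 ≤ s) {a : K} {b : Kᗮ}
    (hab : (a : F) + b ∈ doubleCone v s) : b ∈ doubleCone (⟨v, hv⟩ : Kᗮ) s := by
  have hinner : ⟪v, (a : F) + b⟫ = ⟪v, (b : F)⟫ := by
    rw [inner_add_right, K.inner_left_of_mem_orthogonal a.2 hv, zero_add]
  have hnorm : ‖b‖ ≤ ‖(a : F) + b‖ := by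
    rw [← pow_le_pow_iff_left₀ (norm_nonneg _) (norm_nonneg _) two_ne_zero,
      norm_add_coe_orthogonal_sq]
    exact le_add_of_nonneg_left (sq_nonneg _)
  calc s * ‖b‖ ≤ s * ‖(a : F) + b‖ := by gcongr
    _ ≤ |⟪v, (a : F) + b⟫| := hab
    _ = |⟪v, (b : F)⟫| := by rw [hinner]

variable [FiniteDimensional ℝ F] [MeasurableSpace F] [BorelSpace F]

lemma volume_eq_lintegral_volume_orthogonal_slice (K : Submodule ℝ F) {A : Set F}
    (hA : MeasurableSet A) :
    volume A = ∫⁻ a : K, volume {b : Kᗮ | (a : F) + b ∈ A} := by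
  have hmp := K.measurePreserving_measurableEquivProd (0 : F)
  rw [InnerProductSpace.euclideanHausdorffMeasure_eq_volume] at hmp
  rw [← hmp.symm.measure_preimage_equiv, Measure.volume_eq_prod,
    Measure.prod_apply ((K.measurableEquivProd (0 : F)).symm.measurable hA)]
  simp [preimage]

lemma volume_inter_doubleCone_le_of_axiallySymmetric {A : Set F} (hA : MeasurableSet A)
    (hAK : AxiallySymmetric K A) (hv : v ∈ Kᗮ) (hv1 : ‖v‖ ≤ 1) (hs : 0 ≤ s) :
    volume (A ∩ doubleCone v s) ≤
      ENNReal.ofReal (2 * Real.exp (-(Module.finrank ℝ Kᗮ) * s ^ 2 / 2)) * volume A := by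
  rw [volume_eq_lintegral_volume_orthogonal_slice K
      (hA.inter (isClosed_doubleCone v s).measurableSet),
    volume_eq_lintegral_volume_orthogonal_slice K hA,
    ← lintegral_const_mul' _ _ ENNReal.ofReal_ne_top]
  refine lintegral_mono fun a ↦ ?_
  rw [hAK.slice_eq_norm_preimage a]
  refine le_trans (measure_mono ?_)
    (measure_norm_preimage_inter_doubleCone_le volume (e := (⟨v, hv⟩ : Kᗮ)) hv1 hs _)
  exact fun b hb ↦ ⟨⟨b, hb.1, rfl⟩, mem_doubleCone_of_add_mem hv hs hb.2⟩

theorem toSphere_inter_le_of_axiallySymmetric {B : Set F} (hB : MeasurableSet B)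
    (hBK : AxiallySymmetric K B) (hv : v ∈ Kᗮ) (hv1 : ‖v‖ ≤ 1) (hs : 0 ≤ s) :
    (volume : Measure F).toSphere (Subtype.val ⁻¹' (B ∩ {w | s ≤ |⟪v, w⟫|})) ≤
      ENNReal.ofReal (2 * Real.exp (-(Module.finrank ℝ Kᗮ) * s ^ 2 / 2)) *
        (volume : Measure F).toSphere (Subtype.val ⁻¹' B) := by
  have hsphere : (Subtype.val ⁻¹' (B ∩ {w | s ≤ |⟪v, w⟫|}) : Set (sphere (0 : F) 1)) =
      Subtype.val ⁻¹' (B ∩ doubleCone v s) := by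
    ext y
    simp [doubleCone]
  have hcone : ball 0 1 ∩ coneOver (B ∩ doubleCone v s) =
      (ball 0 1 ∩ coneOver B) ∩ doubleCone v s := by
    rw [inter_assoc]
    nth_rw 2 [← coneOver_doubleCone]
    rfl
  have hmeas : MeasurableSet (ball 0 1 ∩ coneOver B) :=
    measurableSet_ball.inter ((measurable_norm.inv.smul measurable_id) hB)
  have hsymm : AxiallySymmetric K (ball 0 1 ∩ coneOver B) := by
    rw [show ball (0 : F) 1 = norm ⁻¹' Iio 1 by ext; simp]
    exact (AxiallySymmetric.norm_preimage _).inter hBK.coneOver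
  rw [hsphere, toSphere_preimage_val, toSphere_preimage_val, hcone, mul_left_comm]
  gcongr
  exact volume_inter_doubleCone_le_of_axiallySymmetric hmeas hsymm hv hv1 hs

end AxialSymmetry

section Slab

variable {F ι : Type*} [NormedAddCommGroup F] [InnerProductSpace ℝ F]

/-- The unit vectors that are `η`-approximately orthogonal to every `x i`. -/
def sphereSlab (x : ι → F) (η : ℝ) : Set F := sphere 0 1 ∩ {w | ∀ i, |⟪x i, w⟫| ≤ η}

lemma isClosed_sphereSlab (x : ι → F) (η : ℝ) : IsClosed (sphereSlab x η) := by
  simp only [sphereSlab, ofPred_forall]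
  exact isClosed_sphere.inter
    (isClosed_iInter fun i ↦ isClosed_le (by fun_prop) continuous_const)

variable {x : ι → F}

lemma finrank_orthogonal_span_range [Fintype ι] [FiniteDimensional ℝ F]
    (hx : LinearIndependent ℝ x) :
    (Module.finrank ℝ (Submodule.span ℝ (range x))ᗮ : ℝ) =
      Module.finrank ℝ F - Fintype.card ι := by
  rw [← finrank_span_eq_card hx, eq_sub_iff_add_eq']
  exact_mod_cast (Submodule.span ℝ (range x)).finrank_add_finrank_orthogonal

variable [(Submodule.span ℝ (range x)).HasOrthogonalProjection]

lemma inner_starProjection_span_range (i : ι) (w : F) :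
    ⟪x i, (Submodule.span ℝ (range x)).starProjection w⟫ = ⟪x i, w⟫ := by
  rw [← Submodule.inner_starProjection_left_eq_right,
    Submodule.starProjection_eq_self_iff.2 (Submodule.subset_span (mem_range_self i))]

lemma axiallySymmetric_sphereSlab (η : ℝ) :
    AxiallySymmetric (Submodule.span ℝ (range x)) (sphereSlab x η) := by
  refine fun w w' hP hn hw ↦ ⟨?_, fun i ↦ ?_⟩
  · simpa [← hn] using hw.1
  · rw [← inner_starProjection_span_range, ← hP, inner_starProjection_span_range]
    exact hw.2 i

lemma starProjection_span_range_eq_sum [Fintype ι] (hx : Orthonormal ℝ x) (w : F) :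
    (Submodule.span ℝ (range x)).starProjection w = ∑ i, ⟪x i, w⟫ • x i := by
  obtain ⟨c, hc⟩ := (Submodule.mem_span_range_iff_exists_fun ℝ).1
    ((Submodule.span ℝ (range x)).starProjection_apply_mem w)
  have hcoeff (i : ι) : ⟪x i, w⟫ = c i := by
    rw [← inner_starProjection_span_range, ← hc, hx.inner_right_fintype]
  simp only [hcoeff, hc]

lemma norm_starProjection_span_range_le [Fintype ι] (hx : Orthonormal ℝ x) {w : F} {η : ℝ}
    (hw : ∀ i, |⟪x i, w⟫| ≤ η) :
    ‖(Submodule.span ℝ (range x)).starProjection w‖ ≤ Fintype.card ι * η := by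
  rw [starProjection_span_range_eq_sum hx]
  calc ‖∑ i, ⟪x i, w⟫ • x i‖ ≤ ∑ _ : ι, η :=
        norm_sum_le_of_le _ fun i _ ↦ by simpa [norm_smul, hx.1 i] using hw i
    _ = Fintype.card ι * η := by simp

lemma le_abs_inner_starProjection_orthogonal {K : Submodule ℝ F} [K.HasOrthogonalProjection]
    {x₀ y z : F} {s r δ : ℝ} (hx₀ : ‖x₀‖ ≤ 1) (hy : ‖K.starProjection y‖ ≤ r) (hz : ‖z - y‖ ≤ δ)
    (h : s + r + δ ≤ |⟪x₀, z⟫|) : s ≤ |⟪Kᗮ.starProjection x₀, y⟫| := by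
  have hinner (w : F) : |⟪x₀, w⟫| ≤ ‖w‖ :=
    (abs_real_inner_le_norm x₀ w).trans (mul_le_of_le_one_left (norm_nonneg w) hx₀)
  have hsplit : ⟪x₀, z⟫ =
      ⟪Kᗮ.starProjection x₀, y⟫ + ⟪x₀, K.starProjection y⟫ + ⟪x₀, z - y⟫ := by
    rw [Submodule.starProjection_orthogonal_val, inner_sub_left, inner_sub_right,
      Submodule.inner_starProjection_left_eq_right]
    ring
  have htri := abs_add_three ⟪Kᗮ.starProjection x₀, y⟫ ⟪x₀, K.starProjection y⟫ ⟪x₀, z - y⟫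
  rw [← hsplit] at htri
  linarith [hinner (K.starProjection y), hinner (z - y)]

end Slab

lemma cond_apply_le_of_inter_le {Ω : Type*} [MeasurableSpace Ω] {μ : Measure Ω} {S T : Set Ω}
    (hS : MeasurableSet S) {ε : ENNReal} (h : μ (S ∩ T) ≤ ε * μ S) :
    ProbabilityTheory.cond μ S T ≤ ε := by
  rw [ProbabilityTheory.cond_apply hS]
  calc (μ S)⁻¹ * μ (S ∩ T) ≤ (μ S)⁻¹ * (ε * μ S) := by gcongr
    _ = ε * ((μ S)⁻¹ * μ S) := mul_left_comm _ _ _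
    _ ≤ ε := mul_le_of_le_one_right' (ENNReal.inv_mul_le_one _)

section Concentration

variable {d : ℕ}

lemma sphereUniform_inter_le_of_axiallySymmetric {K : Submodule ℝ (EuclideanSpace ℝ (Fin d))}
    {S : Set (EuclideanSpace ℝ (Fin d))} (hS : MeasurableSet S) (hSK : AxiallySymmetric K S)
    {v : EuclideanSpace ℝ (Fin d)} (hv : v ∈ Kᗮ) (hv1 : ‖v‖ ≤ 1) {s : ℝ} (hs : 0 ≤ s) :
    sphereUniform d (S ∩ {w | s ≤ |⟪v, w⟫|}) ≤
      ENNReal.ofReal (2 * Real.exp (-(Module.finrank ℝ Kᗮ) * s ^ 2 / 2)) * sphereUniform d S := by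
  have hT : MeasurableSet {w : EuclideanSpace ℝ (Fin d) | s ≤ |⟪v, w⟫|} :=
    (isClosed_le continuous_const (by fun_prop)).measurableSet
  rw [sphereUniform, Measure.map_apply measurable_subtype_coe (hS.inter hT),
    Measure.map_apply measurable_subtype_coe hS, Measure.smul_apply, Measure.smul_apply,
    smul_eq_mul, smul_eq_mul, mul_left_comm]
  gcongr
  exact toSphere_inter_le_of_axiallySymmetric hS hSK hv hv1 hs

theorem conditioned_sphere_concentration_discretized_general {ι : Type*} [Fintype ι]
    {x : ι → EuclideanSpace ℝ (Fin d)} (hx : Orthonormal ℝ x)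
    {x₀ : EuclideanSpace ℝ (Fin d)} (hx₀ : ‖x₀‖ ≤ 1) {η r : ℝ} (hr : Fintype.card ι * η ≤ r)
    {δ : ℝ} {φ : EuclideanSpace ℝ (Fin d) → EuclideanSpace ℝ (Fin d)}
    (hφ : ∀ w ∈ sphere (0 : EuclideanSpace ℝ (Fin d)) 1, ‖φ w - w‖ ≤ δ) {s : ℝ} (hs : 0 ≤ s) :
    ProbabilityTheory.cond (sphereUniform d) (sphereSlab x η)
        {y | s + r + δ ≤ |⟪x₀, φ y⟫|}
      ≤ ENNReal.ofReal (2 * Real.exp (-((d : ℝ) - Fintype.card ι) * s ^ 2 / 2)) := by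
  set K := Submodule.span ℝ (range x)
  have hmeas := (isClosed_sphereSlab x η).measurableSet
  have hsub : sphereSlab x η ∩ {y | s + r + δ ≤ |⟪x₀, φ y⟫|} ⊆
      sphereSlab x η ∩ {y | s ≤ |⟪Kᗮ.starProjection x₀, y⟫|} := fun y ⟨hyS, hy⟩ ↦
    ⟨hyS, le_abs_inner_starProjection_orthogonal hx₀
      ((norm_starProjection_span_range_le hx hyS.2).trans hr) (hφ y hyS.1) hy⟩
  have hdim : (Module.finrank ℝ Kᗮ : ℝ) = d - Fintype.card ι := by
    rw [finrank_orthogonal_span_range hx.linearIndependent, finrank_euclideanSpace_fin]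
  rw [← hdim]
  exact cond_apply_le_of_inter_le hmeas <| (measure_mono hsub).trans <|
    sphereUniform_inter_le_of_axiallySymmetric hmeas (axiallySymmetric_sphereSlab η)
      (Kᗮ.starProjection_apply_mem x₀) ((Kᗮ.norm_starProjection_apply_le x₀).trans hx₀) hs

end Concentration

lemma mul_one_div_cube_le {a b : ℝ} (hb : 0 < b) (hab : a ≤ b) : a * (1 / b ^ 3) ≤ 1 / b ^ 2 :=
  calc a * (1 / b ^ 3) ≤ b * (1 / b ^ 3) := by gcongr
    _ = 1 / b ^ 2 := by field_simp

lemma two_mul_exp_le_two_mul_sqrt_mul_exp {d k t : ℝ} (hd : 0 < d) (hk : k ≤ d / 3) (ht : 1 ≤ t) :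
    2 * Real.exp (-(d - k) * Real.sqrt (t / d) ^ 2 / 2) ≤
      2 * Real.sqrt t * Real.exp (-t / 3) := by
  have hexponent : t / 3 ≤ (d - k) * (t / d) / 2 :=
    calc t / 3 = (d - d / 3) * (t / d) / 2 := by field_simp; norm_num
      _ ≤ (d - k) * (t / d) / 2 := by gcongr
  have hsqrt : 1 ≤ Real.sqrt t := Real.one_le_sqrt.2 ht
  rw [Real.sq_sqrt (by positivity)]
  calc 2 * Real.exp (-(d - k) * (t / d) / 2) ≤ 2 * Real.exp (-t / 3) := by
        gcongr 2 * Real.exp ?_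
        linarith
    _ ≤ 2 * Real.sqrt t * Real.exp (-t / 3) := by
        gcongr
        linarith

/-- Concentration for the `δ`-discretization `z = φ(y)` of a random unit vector `y`
conditioned to be `1/d³`-approximately orthogonal to `k ≤ d/3 - 1` orthonormal vectors:
for any fixed `x` in the unit ball and `t ≥ 4`,
`ℙ(|⟨x, z⟩| ≥ √(t/d) + 1/d² + δ) ≤ 2√t e^{-t/3}`. -/
theorem conditioned_sphere_concentration_discretized (d k : ℕ) (hd : 4 ≤ d)
    (hk : (k : ℝ) ≤ (d : ℝ) / 3 - 1)
    (x : Fin k → EuclideanSpace ℝ (Fin d)) (hx : Orthonormal ℝ x)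
    (x₀ : EuclideanSpace ℝ (Fin d)) (hx₀ : x₀ ∈ Metric.closedBall (0 : EuclideanSpace ℝ (Fin d)) 1)
    (S : Set (EuclideanSpace ℝ (Fin d)))
    (hS : S = Metric.sphere (0 : EuclideanSpace ℝ (Fin d)) 1 ∩
        {w | ∀ i : Fin k, |⟪x i, w⟫| ≤ 1 / (d : ℝ) ^ 3})
    (δ : ℝ) (hδ0 : 0 < δ) (hδ1 : δ ≤ 1)
    (φ : EuclideanSpace ℝ (Fin d) → EuclideanSpace ℝ (Fin d))
    (hφ : ∀ w ∈ Metric.sphere (0 : EuclideanSpace ℝ (Fin d)) 1, ‖φ w - w‖ ≤ δ)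
    (t : ℝ) (ht : 4 ≤ t) :
    ProbabilityTheory.cond (sphereUniform d) S
        {y | Real.sqrt (t / d) + 1 / (d : ℝ) ^ 2 + δ ≤ |⟪x₀, φ y⟫|}
      ≤ ENNReal.ofReal (2 * Real.sqrt t * Real.exp (-t / 3)) := by
  have hd' : (0 : ℝ) < d := by positivity
  have hr : Fintype.card (Fin k) * (1 / (d : ℝ) ^ 3) ≤ 1 / (d : ℝ) ^ 2 :=
    mul_one_div_cube_le hd' (by rw [Fintype.card_fin]; linarith)
  subst hS
  exact (conditioned_sphere_concentration_discretized_general hx (mem_closedBall_zero_iff.1 hx₀) hr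
    hφ (Real.sqrt_nonneg _)).trans (ENNReal.ofReal_le_ofReal
      (two_mul_exp_le_two_mul_sqrt_mul_exp hd' (by rw [Fintype.card_fin]; linarith) (by linarith)))
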